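/- The generating function identity ∑_{n≥1} spt2bar(n) q^n = ∑_{n≥1} q^{2n} (-q^{2n+1}; q)_∞ / ((1-q^{2n})^2 (q^{2n+1}; q)_∞) holds as formal power series in q. -/

import Mathlib

/-- An overpartition of `n`: a partition of `n` together with a set of part
sizes that are overlined (the first occurrence of each such size is overlined). -/
def Overpartition (n : ℕ) : Type :=
  Σ p : Nat.Partition n, {s : Finset ℕ // s ⊆ p.parts.toFinset}

noncomputable instance (n : ℕ) : Fintype (Overpartition n) := by
  unfold Overpartition
  classical
  have : ∀ p : Nat.Partition n, Fintype {s : Finset ℕ // s ⊆ p.parts.toFinset} := fun p =>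
    Fintype.subtype p.parts.toFinset.powerset (by simp)
  exact Sigma.instFintype

/-- The smallest part of a partition (junk value `0` for the empty partition). -/
noncomputable def smallestPart {n : ℕ} (p : Nat.Partition n) : ℕ :=
  sInf {m | m ∈ p.parts}

open scoped Classical in
/-- `spt2bar n`: the total number of occurrences of the smallest part, summed over
all overpartitions of `n` whose smallest part is even and not overlined. -/
noncomputable def spt2bar (n : ℕ) : ℕ :=
  ∑ o : Overpartition n,
    if Even (smallestPart o.1) ∧ smallestPart o.1 ∉ o.2.1 then
      o.1.parts.count (smallestPart o.1)
    else 0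

/-- The infinite q-Pochhammer symbol `(a; q)_∞ = ∏_{j ≥ 0} (1 - a q^j)`. -/
noncomputable def qPochInf (a q : ℂ) : ℂ := ∏' j : ℕ, (1 - a * q ^ j)

/-- The finite q-Pochhammer symbol `(a; q)_n = ∏_{j = 0}^{n-1} (1 - a q^j)`. -/
noncomputable def qPoch (a q : ℂ) (n : ℕ) : ℂ := ∏ j ∈ Finset.range n, (1 - a * q ^ j)

/-!
Give a partition the weight `∏ f i c` over its part sizes `i`, where `c` is the multiplicity of
`i`. The generating function of these weights is the product over `i ≥ 1` of
`1 + ∑_{c ≥ 1} f i c q^{ic}`. With weight `2` for the parts larger than `m` (overlined or not) and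
`c` for the part `m` (not overlined, one occurrence marked), this product is
`1 + q^m / (1 - q^m)^2` times `(-q^{m+1}; q)_∞ / (q^{m+1}; q)_∞`. The first summand accounts for
the partitions without the part `m`; the second one counts the occurrences of the smallest part
`m`, and is summed over even `m`. The interchange of the sums over `m` and `n` is legitimate
because `spt2bar n` is at most the weighted count of partitions with `f i c = 2 c`, whose
generating function converges absolutely.
-/

section AbsoluteConvergence

open Finset PowerSeries

variable {R : Type*} [NormedCommRing R]

/-- The power series `F` converges absolutely at `q`, and its sum there is `v`. -/
structure AbsHasSumAt (F : R⟦X⟧) (q v : R) : Prop where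
  summable_norm : Summable fun n ↦ ‖coeff n F * q ^ n‖
  hasSum : HasSum (fun n ↦ coeff n F * q ^ n) v

namespace AbsHasSumAt

variable {F G : R⟦X⟧} {q v w : R}

theorem add (hF : AbsHasSumAt F q v) (hG : AbsHasSumAt G q w) :
    AbsHasSumAt (F + G) q (v + w) where
  summable_norm := by
    refine Summable.of_nonneg_of_le (fun _ ↦ norm_nonneg _) (fun n ↦ ?_)
      (hF.summable_norm.add hG.summable_norm)
    rw [map_add, add_mul]
    exact norm_add_le _ _
  hasSum := by simpa only [map_add, add_mul] using hF.hasSum.add hG.hasSum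

theorem sub (hF : AbsHasSumAt F q v) (hG : AbsHasSumAt G q w) :
    AbsHasSumAt (F - G) q (v - w) where
  summable_norm := by
    refine Summable.of_nonneg_of_le (fun _ ↦ norm_nonneg _) (fun n ↦ ?_)
      (hF.summable_norm.add hG.summable_norm)
    rw [map_sub, sub_mul]
    exact norm_sub_le _ _
  hasSum := by simpa only [map_sub, sub_mul] using hF.hasSum.sub hG.hasSum

theorem one (q : R) : AbsHasSumAt 1 q 1 := by
  have vanish : ∀ n ≠ 0, coeff n (1 : R⟦X⟧) * q ^ n = 0 := fun n hn ↦ by simp [coeff_one, hn]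
  constructor
  · exact (hasSum_single 0 fun n hn ↦ by rw [vanish n hn, norm_zero]).summable
  · simpa using hasSum_single 0 vanish

theorem mul [CompleteSpace R] (hF : AbsHasSumAt F q v) (hG : AbsHasSumAt G q w) :
    AbsHasSumAt (F * G) q (v * w) := by
  have cauchy_term (n : ℕ) : coeff n (F * G) * q ^ n =
      ∑ kl ∈ antidiagonal n, (coeff kl.1 F * q ^ kl.1) * (coeff kl.2 G * q ^ kl.2) := by
    rw [coeff_mul, sum_mul]
    refine sum_congr rfl fun kl hkl ↦ ?_
    rw [← mem_antidiagonal.mp hkl, pow_add]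
    ring
  have summable_norm : Summable fun n ↦ ‖coeff n (F * G) * q ^ n‖ := by
    simpa only [cauchy_term] using
      summable_norm_sum_mul_antidiagonal_of_summable_norm hF.summable_norm hG.summable_norm
  refine ⟨summable_norm, summable_norm.of_norm.hasSum_iff.mpr ?_⟩
  rw [← hF.hasSum.tsum_eq, ← hG.hasSum.tsum_eq,
    tsum_mul_tsum_eq_tsum_sum_antidiagonal_of_summable_norm hF.summable_norm hG.summable_norm]
  exact tsum_congr cauchy_term

theorem prod [CompleteSpace R] {ι : Type*} {s : Finset ι} {F : ι → R⟦X⟧} {v : ι → R}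
    (h : ∀ i ∈ s, AbsHasSumAt (F i) q (v i)) : AbsHasSumAt (∏ i ∈ s, F i) q (∏ i ∈ s, v i) := by
  classical
  induction s using Finset.induction_on with
  | empty => simpa using one q
  | insert a s ha ih =>
    rw [prod_insert ha, prod_insert ha]
    exact (h a (mem_insert_self a s)).mul (ih fun i hi ↦ h i (mem_insert_of_mem hi))

open scoped PowerSeries.WithPiTopology in
theorem of_hasSum_smul_X_pow {a : ℕ → R} {e : ℕ → ℕ} (he : e.Injective)
    (hF : HasSum (fun j ↦ a j • (X : R⟦X⟧) ^ e j) F) (h : Summable fun j ↦ ‖a j * q ^ e j‖)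
    (hv : HasSum (fun j ↦ a j * q ^ e j) v) : AbsHasSumAt F q v := by
  have coeff_F (n : ℕ) : HasSum (fun j ↦ if n = e j then a j else 0) (coeff n F) := by
    simpa [Function.comp_def, coeff_X_pow] using
      hF.map (coeff (R := R) n) (WithPiTopology.continuous_coeff R n)
  have coeff_exponent (j : ℕ) : coeff (e j) F = a j :=
    (coeff_F (e j)).unique <| by
      simpa using hasSum_single (f := fun i ↦ if e j = e i then a i else 0) j
        fun i hi ↦ if_neg fun hij ↦ hi (he hij).symm
  have coeff_gap {n : ℕ} (hn : n ∉ Set.range e) : coeff n F = 0 :=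
    (coeff_F n).unique <| by
      simpa only [if_neg fun hj ↦ hn ⟨_, Eq.symm hj⟩] using hasSum_zero
  constructor
  · refine (he.summable_iff fun n hn ↦ by simp [coeff_gap hn]).mp ?_
    simpa only [Function.comp_def, coeff_exponent] using h
  · refine (he.hasSum_iff fun n hn ↦ by simp [coeff_gap hn]).mp ?_
    simpa only [Function.comp_def, coeff_exponent] using hv

end AbsHasSumAt

end AbsoluteConvergence

section WeightedPartitions

open Finset PowerSeries Filter Nat.Partition
open scoped PowerSeries.WithPiTopology

variable {K : Type*} [NormedField K] {f : ℕ → ℕ → K} {q : K}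

/-- The factor contributed by the part size `i` to the product form of the generating function of
partitions in which a part `i` occurring `c > 0` times has weight `f i c`. -/
noncomputable def partFactor (f : ℕ → ℕ → K) (q : K) (i : ℕ) : K :=
  1 + ∑' c, f i (c + 1) * q ^ (i * (c + 1))

/-- Absolute convergence at `q` of the double series of all nonconstant terms in the factors
`partFactor f q i`, `i ≥ 1`. -/
def AbsSummableWeight (f : ℕ → ℕ → K) (q : K) : Prop :=
  Summable fun x : ℕ × ℕ ↦ ‖f (x.1 + 1) (x.2 + 1) * q ^ ((x.1 + 1) * (x.2 + 1))‖

section Truncation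

variable {R : Type*} [CommSemiring R]

/-- The weight `f` restricted to parts of size at most `N`. -/
def truncateParts (f : ℕ → ℕ → R) (N i c : ℕ) : R := if i ≤ N then f i c else 0

theorem coeff_genFun_truncateParts (f : ℕ → ℕ → R) {N n : ℕ} (h : n ≤ N) :
    coeff n (genFun (truncateParts f N)) = coeff n (genFun f) := by
  rw [coeff_genFun, coeff_genFun]
  refine sum_congr rfl fun p _ ↦ prod_congr rfl fun i hi ↦ if_pos ?_
  have mem_parts : i ∈ p.parts := by simpa using hi
  exact (Multiset.le_sum_of_mem mem_parts).trans (p.parts_sum.trans_le h)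

theorem genFun_truncateParts [TopologicalSpace R] [T2Space R] (f : ℕ → ℕ → R) (N : ℕ) :
    genFun (truncateParts f N) =
      ∏ i ∈ range N, (1 + ∑' c, f (i + 1) (c + 1) • (X : R⟦X⟧) ^ ((i + 1) * (c + 1))) := by
  refine (hasProd_genFun (truncateParts f N)).unique ?_
  rw [prod_congr rfl (g := fun i ↦
    1 + ∑' c, truncateParts f N (i + 1) (c + 1) • (X : R⟦X⟧) ^ ((i + 1) * (c + 1)))]
  · refine hasProd_prod_of_ne_finset_one fun i hi ↦ ?_
    have part_gt : ¬i + 1 ≤ N := by simpa using hi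
    simp [truncateParts, part_gt]
  · intro i hi
    have part_le : i + 1 ≤ N := by simpa using hi
    simp [truncateParts, part_le]

end Truncation

theorem norm_truncateParts_le (f : ℕ → ℕ → K) (N i c : ℕ) : ‖truncateParts f N i c‖ ≤ ‖f i c‖ := by
  unfold truncateParts
  split_ifs <;> simp

theorem norm_coeff_genFun_le {g : ℕ → ℕ → ℝ} (h : ∀ i c, ‖f i (c + 1)‖ ≤ g i (c + 1)) (n : ℕ) :
    ‖coeff n (genFun f)‖ ≤ coeff n (genFun g) := by
  rw [coeff_genFun, coeff_genFun]
  refine norm_sum_le_of_le _ fun p _ ↦ ?_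
  rw [Finsupp.prod, norm_prod]
  refine prod_le_prod (fun _ _ ↦ norm_nonneg _) fun i hi ↦ ?_
  obtain ⟨c, hc⟩ := Nat.exists_eq_add_one_of_ne_zero (Finsupp.mem_support_iff.mp hi)
  rw [hc]
  exact h i c

namespace AbsSummableWeight

theorem norm (hf : AbsSummableWeight f q) : AbsSummableWeight (fun i c ↦ ‖f i c‖) ‖q‖ := by
  simpa [AbsSummableWeight] using hf

theorem summable_partFactor_term (hf : AbsSummableWeight f q) (i : ℕ) :
    Summable fun c ↦ ‖f (i + 1) (c + 1) * q ^ ((i + 1) * (c + 1))‖ :=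
  hf.prod_factor i

variable [CompleteSpace K]

theorem multipliable_partFactor (hf : AbsSummableWeight f q) :
    Multipliable fun i ↦ partFactor f q (i + 1) := by
  refine multipliable_one_add_of_summable <| Summable.of_nonneg_of_le (fun _ ↦ norm_nonneg _)
    (fun i ↦ norm_tsum_le_tsum_norm (hf.summable_partFactor_term i)) hf.prod

theorem absHasSumAt_genFun_truncateParts (hf : AbsSummableWeight f q) (N : ℕ) :
    AbsHasSumAt (genFun (truncateParts f N)) q (∏ i ∈ range N, partFactor f q (i + 1)) := by
  rw [genFun_truncateParts]
  refine .prod fun i _ ↦ (AbsHasSumAt.one q).add ?_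
  have exponent_injective : Function.Injective fun c ↦ (i + 1) * (c + 1) := fun a b h ↦ by
    simpa using h
  exact .of_hasSum_smul_X_pow exponent_injective (summable_genFun_term f i).hasSum
    (hf.summable_partFactor_term i) (hf.summable_partFactor_term i).of_norm.hasSum

theorem summable_coeff_genFun_of_nonneg {f : ℕ → ℕ → ℝ} {r : ℝ} (hf : AbsSummableWeight f r)
    (f_nonneg : ∀ i c, 0 ≤ f i c) (r_nonneg : 0 ≤ r) :
    Summable fun n ↦ coeff n (genFun f) * r ^ n := by
  have coeff_nonneg {g : ℕ → ℕ → ℝ} (hg : ∀ i c, 0 ≤ g i c) (n : ℕ) :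
      0 ≤ coeff n (genFun g) * r ^ n := by
    rw [coeff_genFun]
    exact mul_nonneg (sum_nonneg fun p _ ↦ prod_nonneg fun i _ ↦ hg i _) (pow_nonneg r_nonneg n)
  have truncate_nonneg (N i c : ℕ) : 0 ≤ truncateParts f N i c := by
    unfold truncateParts
    split_ifs
    exacts [f_nonneg i c, le_rfl]
  obtain ⟨C, hC⟩ := hf.multipliable_partFactor.hasProd.tendsto_prod_nat.bddAbove_range
  refine summable_of_sum_range_le (c := C) (coeff_nonneg f_nonneg) fun N ↦ ?_
  have truncated := hf.absHasSumAt_genFun_truncateParts N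
  calc ∑ n ∈ range N, coeff n (genFun f) * r ^ n
      = ∑ n ∈ range N, coeff n (genFun (truncateParts f N)) * r ^ n :=
        sum_congr rfl fun n hn ↦ by rw [coeff_genFun_truncateParts f (mem_range.mp hn).le]
    _ ≤ ∏ i ∈ range N, partFactor f r (i + 1) :=
        sum_le_hasSum _ (fun n _ ↦ coeff_nonneg (truncate_nonneg N) n) truncated.hasSum
    _ ≤ C := hC ⟨N, rfl⟩

/-- Truncating to parts of size at most `N` turns the product into a finite one; the limit `N → ∞`
is then taken by dominated convergence. -/
theorem absHasSumAt_genFun (hf : AbsSummableWeight f q) :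
    AbsHasSumAt (genFun f) q (∏' i, partFactor f q (i + 1)) := by
  have bound_summable : Summable fun n ↦ coeff n (genFun fun i c ↦ ‖f i c‖) * ‖q‖ ^ n :=
    hf.norm.summable_coeff_genFun_of_nonneg (fun _ _ ↦ norm_nonneg _) (norm_nonneg q)
  have dominated {g : ℕ → ℕ → K} (hg : ∀ i c, ‖g i c‖ ≤ ‖f i c‖) (n : ℕ) :
      ‖coeff n (genFun g) * q ^ n‖ ≤ coeff n (genFun fun i c ↦ ‖f i c‖) * ‖q‖ ^ n := by
    rw [norm_mul, norm_pow]
    gcongr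
    exact norm_coeff_genFun_le (fun i c ↦ hg i (c + 1)) n
  have summable_norm : Summable fun n ↦ ‖coeff n (genFun f) * q ^ n‖ :=
    bound_summable.of_nonneg_of_le (fun _ ↦ norm_nonneg _) (dominated fun _ _ ↦ le_rfl)
  refine ⟨summable_norm, summable_norm.of_norm.hasSum_iff.mpr ?_⟩
  have tendsto_tsum : Tendsto (fun N ↦ ∑' n, coeff n (genFun (truncateParts f N)) * q ^ n) atTop
      (nhds (∑' n, coeff n (genFun f) * q ^ n)) := by
    refine tendsto_tsum_of_dominated_convergence bound_summable (fun n ↦ ?_)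
      (.of_forall fun N ↦ dominated (norm_truncateParts_le f N))
    refine tendsto_const_nhds.congr' ?_
    filter_upwards [eventually_ge_atTop n] with N hN
    rw [coeff_genFun_truncateParts f hN]
  simp_rw [(hf.absHasSumAt_genFun_truncateParts _).hasSum.tsum_eq] at tendsto_tsum
  exact tendsto_nhds_unique tendsto_tsum hf.multipliable_partFactor.hasProd.tendsto_prod_nat

end AbsSummableWeight

end WeightedPartitions

section GeometricWeights

open Nat.Partition

variable {K : Type*} [NormedField K] {q x : K}

theorem AbsSummableWeight.of_norm_le_const_mul {f : ℕ → ℕ → K} {C : ℝ} (hq : ‖q‖ < 1)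
    (h : ∀ i c, ‖f i (c + 1)‖ ≤ C * (c + 1 : ℕ)) : AbsSummableWeight f q := by
  have summable_linear : Summable fun c : ℕ ↦ C * ((c + 1 : ℕ) * ‖q‖ ^ (c + 1)) :=
    ((summable_nat_add_iff 1).mpr
      (hasSum_coe_mul_geometric_of_norm_lt_one (r := ‖q‖) (by simpa using hq)).summable).mul_left C
  have C_nonneg : 0 ≤ C := by simpa using (norm_nonneg _).trans (h 0 0)
  refine Summable.of_nonneg_of_le (fun _ ↦ norm_nonneg _) (fun x ↦ ?_) <|
    (summable_geometric_of_lt_one (norm_nonneg q) hq).mul_of_nonneg summable_linear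
      (fun _ ↦ by positivity) (fun _ ↦ by positivity)
  have exponent_le : x.1 + (x.2 + 1) ≤ (x.1 + 1) * (x.2 + 1) := by
    nlinarith [Nat.zero_le (x.1 * x.2)]
  calc ‖f (x.1 + 1) (x.2 + 1) * q ^ ((x.1 + 1) * (x.2 + 1))‖
      ≤ C * (x.2 + 1 : ℕ) * ‖q‖ ^ (x.1 + (x.2 + 1)) := by
        rw [norm_mul, norm_pow]
        gcongr ?_ * ?_
        · exact h _ _
        · exact pow_le_pow_of_le_one (norm_nonneg q) hq.le exponent_le
    _ = ‖q‖ ^ x.1 * (C * ((x.2 + 1 : ℕ) * ‖q‖ ^ (x.2 + 1))) := by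
        rw [pow_add]
        ring

theorem summable_norm_mul_pow (hq : ‖q‖ < 1) (a : K) : Summable fun j ↦ ‖a * q ^ j‖ := by
  simp_rw [norm_mul, norm_pow]
  exact (summable_geometric_of_lt_one (norm_nonneg q) hq).mul_left _

theorem norm_pow_lt_one (hq : ‖q‖ < 1) {m : ℕ} (hm : m ≠ 0) : ‖q ^ m‖ < 1 := by
  rw [norm_pow]
  exact pow_lt_one₀ (norm_nonneg q) hq hm

theorem one_sub_ne_zero_of_norm_lt_one (hx : ‖x‖ < 1) : 1 - x ≠ 0 := by
  rw [sub_ne_zero]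
  rintro rfl
  simp at hx

theorem one_add_tsum_two_mul_pow_succ (hx : ‖x‖ < 1) :
    1 + ∑' c : ℕ, 2 * x ^ (c + 1) = (1 + x) / (1 - x) := by
  have h := one_sub_ne_zero_of_norm_lt_one hx
  simp_rw [pow_succ', tsum_mul_left, tsum_geometric_of_norm_lt_one hx]
  field_simp
  ring

theorem tsum_succ_mul_pow_succ (hx : ‖x‖ < 1) :
    ∑' c : ℕ, (c + 1 : ℕ) * x ^ (c + 1) = x / (1 - x) ^ 2 := by
  have h := hasSum_coe_mul_geometric_of_norm_lt_one hx
  rw [← h.tsum_eq, h.summable.tsum_eq_zero_add]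
  simp

end GeometricWeights

section SmallestPart

open Finset PowerSeries Nat.Partition

variable {n m : ℕ}

theorem smallestPart_le (p : n.Partition) {i : ℕ} (hi : i ∈ p.parts) : smallestPart p ≤ i :=
  Nat.sInf_le hi

theorem smallestPart_mem_parts (p : n.Partition) {i : ℕ} (hi : i ∈ p.parts) :
    smallestPart p ∈ p.parts :=
  Nat.sInf_mem (s := {i | i ∈ p.parts}) ⟨i, hi⟩

theorem smallestPart_mem_parts_iff (p : n.Partition) :
    smallestPart p ∈ p.parts ↔ smallestPart p ≠ 0 :=
  ⟨fun h ↦ (p.parts_pos h).ne', fun h ↦ Nat.sInf_mem (Nat.nonempty_of_pos_sInf h.pos)⟩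

/-- The total number of occurrences of the smallest part in the overpartitions with underlying
partition `p` whose smallest part is not overlined: every other part size may be overlined or not.
It is `0` for the empty partition, whose `smallestPart` is the junk value `0`. -/
noncomputable def plainSmallestPartCount (p : n.Partition) : ℕ :=
  p.parts.count (smallestPart p) * 2 ^ (#p.parts.toFinset - 1)

/-- The total number of occurrences of the smallest part, summed over the overpartitions of `n`
whose smallest part is `m` and not overlined. -/
noncomputable def sptBar (m n : ℕ) : ℕ :=
  ∑ p : n.Partition with smallestPart p = m, plainSmallestPartCount p

theorem plainSmallestPartCount_eq_zero {p : n.Partition} (h : smallestPart p = 0) :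
    plainSmallestPartCount p = 0 := by
  have not_mem : smallestPart p ∉ p.parts := by simpa [smallestPart_mem_parts_iff] using h
  rw [plainSmallestPartCount, Multiset.count_eq_zero_of_notMem not_mem, zero_mul]

theorem card_filter_notMem_powerset {α : Type*} [DecidableEq α] {s : Finset α} {a : α}
    (ha : a ∈ s) : #{t ∈ s.powerset | a ∉ t} = 2 ^ (#s - 1) := by
  have filter_eq : {t ∈ s.powerset | a ∉ t} = (s.erase a).powerset := by
    ext t
    simp only [mem_filter, mem_powerset, subset_erase]
  rw [filter_eq, card_powerset, card_erase_of_mem ha]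

theorem sum_overpartition {M : Type*} [AddCommMonoid M] (g : n.Partition → Finset ℕ → M) :
    ∑ o : Overpartition n, g o.1 o.2.1 = ∑ p, ∑ s ∈ p.parts.toFinset.powerset, g p s := by
  rw [sum_sigma']
  exact sum_bij' (fun o _ ↦ (⟨o.1, o.2.1⟩ : Σ _ : n.Partition, Finset ℕ))
    (fun x hx ↦ ⟨x.1, x.2, by simpa using hx⟩) (fun o _ ↦ by simpa using o.2.2)
    (fun _ _ ↦ mem_univ _) (fun _ _ ↦ rfl) (fun _ _ ↦ rfl) (fun _ _ ↦ rfl)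

theorem spt2bar_eq_sum_partition (n : ℕ) :
    spt2bar n = ∑ p : n.Partition with Even (smallestPart p), plainSmallestPartCount p := by
  classical
  rw [spt2bar, sum_overpartition fun p s ↦
    if Even (smallestPart p) ∧ smallestPart p ∉ s then p.parts.count (smallestPart p) else 0,
    sum_filter]
  refine sum_congr rfl fun p _ ↦ ?_
  by_cases even : Even (smallestPart p)
  · simp only [even, true_and, if_true]
    rw [← sum_filter, sum_const, smul_eq_mul]
    by_cases mem : smallestPart p ∈ p.parts
    · rw [card_filter_notMem_powerset (by simpa using mem), plainSmallestPartCount, mul_comm]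
    · simp [plainSmallestPartCount, Multiset.count_eq_zero_of_notMem mem]
  · simp [even]

theorem hasSum_sptBar_even (n : ℕ) : HasSum (fun k ↦ sptBar (2 * (k + 1)) n) (spt2bar n) := by
  rw [spt2bar_eq_sum_partition, sum_filter]
  simp_rw [sptBar, sum_filter]
  refine hasSum_sum fun p _ ↦ ?_
  by_cases smallest_eq : ∃ k, smallestPart p = 2 * (k + 1)
  · obtain ⟨k, hk⟩ := smallest_eq
    rw [if_pos (hk ▸ even_two_mul (k + 1))]
    simpa [hk] using hasSum_single (f := fun j ↦
      if smallestPart p = 2 * (j + 1) then plainSmallestPartCount p else 0) k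
      fun j hj ↦ if_neg (by lia)
  · have summand_eq_zero : (if Even (smallestPart p) then plainSmallestPartCount p else 0) = 0 := by
      by_contra h
      obtain ⟨⟨k, hk⟩, ne_zero⟩ := ite_ne_right_iff.mp h
      have : smallestPart p ≠ 0 := fun h ↦ ne_zero (plainSmallestPartCount_eq_zero h)
      exact smallest_eq ⟨k - 1, by lia⟩
    rw [summand_eq_zero]
    simpa only [if_neg fun h ↦ smallest_eq ⟨_, h⟩] using hasSum_zero

theorem hasSum_natCast_sptBar_even {A : Type*} [NonAssocSemiring A] [TopologicalSpace A]
    (n : ℕ) : HasSum (fun k ↦ (sptBar (2 * (k + 1)) n : A)) (spt2bar n) :=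
  (hasSum_sptBar_even n).map (Nat.castAddMonoidHom A) continuous_of_discreteTopology

theorem plainSmallestPartCount_le_prod (p : n.Partition) :
    plainSmallestPartCount p ≤ p.parts.toFinsupp.prod fun _ c ↦ 2 * c := by
  by_cases h : smallestPart p = 0
  · simp [plainSmallestPartCount_eq_zero h]
  · have mem : smallestPart p ∈ p.parts.toFinset := by
      simpa using (smallestPart_mem_parts_iff p).mpr h
    simp only [Finsupp.prod, Multiset.toFinsupp_support, Multiset.toFinsupp_apply]
    rw [plainSmallestPartCount, ← mul_prod_erase _ _ mem, ← card_erase_of_mem mem, ← prod_const]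
    gcongr with i hi
    · exact Nat.le_mul_of_pos_left _ two_pos
    · have : 0 < p.parts.count i := Multiset.count_pos.mpr (by simpa using mem_of_mem_erase hi)
      lia

theorem spt2bar_le_coeff_genFun (n : ℕ) :
    (spt2bar n : ℝ) ≤ coeff n (genFun fun _ c ↦ (2 * c : ℝ)) := by
  have nat_le : spt2bar n ≤ ∑ p : n.Partition, p.parts.toFinsupp.prod fun _ c ↦ 2 * c := by
    rw [spt2bar_eq_sum_partition]
    exact (sum_le_univ_sum_of_nonneg fun _ ↦ zero_le).trans
      (sum_le_sum fun p _ ↦ plainSmallestPartCount_le_prod p)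
  rw [coeff_genFun]
  exact_mod_cast nat_le

end SmallestPart

section PartWeights

open Finset PowerSeries Nat.Partition

variable {R : Type*} [CommSemiring R] {m n : ℕ}

/-- Counts overpartitions with all parts larger than `m`: each part size is overlined or not. -/
def largePartsWeight (m i _c : ℕ) : R := if i ≤ m then 0 else 2

/-- Counts overpartitions with all parts at least `m`, where `m` if present is not overlined and has
one of its occurrences marked. The parts larger than `m` are weighted as in `largePartsWeight`. -/
def markedPartWeight (m i c : ℕ) : R := if i = m then c else largePartsWeight m i c

theorem prod_markedPartWeight_smallestPart (p : n.Partition) (h : smallestPart p ≠ 0) :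
    p.parts.toFinsupp.prod (markedPartWeight (smallestPart p)) =
      (plainSmallestPartCount p : R) := by
  have mem : smallestPart p ∈ p.parts.toFinset := by
    simpa using (smallestPart_mem_parts_iff p).mpr h
  simp only [Finsupp.prod, Multiset.toFinsupp_support, Multiset.toFinsupp_apply]
  rw [← mul_prod_erase _ _ mem, markedPartWeight, if_pos rfl, plainSmallestPartCount, Nat.cast_mul]
  congr 1
  rw [prod_eq_pow_card (b := 2), card_erase_of_mem mem, Nat.cast_pow, Nat.cast_ofNat]
  intro i hi
  obtain ⟨ne, hi⟩ := mem_erase.mp hi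
  have := smallestPart_le p (Multiset.mem_toFinset.mp hi)
  rw [markedPartWeight, if_neg ne, largePartsWeight, if_neg (by lia)]

theorem prod_parts_eq_zero {f : ℕ → ℕ → R} {p : n.Partition} {i : ℕ} (hi : i ∈ p.parts)
    (hf : ∀ c, f i c = 0) : p.parts.toFinsupp.prod f = 0 :=
  prod_eq_zero (by simpa using hi) (hf _)

theorem prod_markedPartWeight (p : n.Partition) (hm : m ≠ 0) :
    p.parts.toFinsupp.prod (markedPartWeight m) = p.parts.toFinsupp.prod (largePartsWeight m) +
      if smallestPart p = m then (plainSmallestPartCount p : R) else 0 := by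
  by_cases mem : m ∈ p.parts
  · rw [prod_parts_eq_zero (f := largePartsWeight m) mem fun _ ↦ if_pos le_rfl, zero_add]
    split_ifs with smallest_eq
    · subst smallest_eq
      exact prod_markedPartWeight_smallestPart p hm
    · have smallest_lt : smallestPart p < m := (smallestPart_le p mem).lt_of_ne smallest_eq
      refine prod_parts_eq_zero (smallestPart_mem_parts p mem) fun c ↦ ?_
      rw [markedPartWeight, if_neg smallest_eq, largePartsWeight, if_pos smallest_lt.le]
  · have smallest_ne : smallestPart p ≠ m := by
      rintro rfl
      exact mem ((smallestPart_mem_parts_iff p).mpr hm)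
    rw [if_neg smallest_ne, add_zero]
    refine Finsupp.prod_congr fun i hi ↦ if_neg ?_
    rintro rfl
    exact mem (by simpa using hi)

theorem genFun_markedPartWeight (hm : m ≠ 0) :
    genFun (markedPartWeight m) =
      genFun (largePartsWeight m) + PowerSeries.mk fun n ↦ (sptBar m n : R) := by
  ext n
  simp only [map_add, coeff_genFun, coeff_mk, sptBar, sum_filter, Nat.cast_sum, Nat.cast_ite,
    Nat.cast_zero, ← sum_add_distrib, prod_markedPartWeight _ hm]

end PartWeights

section Evaluation

open Nat.Partition

variable {K : Type*} [NormedField K] {q : K} {m : ℕ}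

theorem norm_largePartsWeight_le_two (m i c : ℕ) : ‖(largePartsWeight m i c : K)‖ ≤ 2 := by
  unfold largePartsWeight
  split_ifs
  · simp
  · simpa using Nat.norm_cast_le (α := K) 2

theorem absSummableWeight_largePartsWeight (hq : ‖q‖ < 1) (m : ℕ) :
    AbsSummableWeight (largePartsWeight m) q :=
  .of_norm_le_const_mul (C := 2) hq fun i c ↦
    (norm_largePartsWeight_le_two m i _).trans (le_mul_of_one_le_right two_pos.le (by simp))

theorem absSummableWeight_markedPartWeight (hq : ‖q‖ < 1) (m : ℕ) :
    AbsSummableWeight (markedPartWeight m) q :=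
  .of_norm_le_const_mul (C := 2) hq fun i c ↦ by
    unfold markedPartWeight
    split_ifs
    · calc ‖((c + 1 : ℕ) : K)‖ ≤ (c + 1 : ℕ) := by simpa using Nat.norm_cast_le (α := K) (c + 1)
        _ ≤ 2 * (c + 1 : ℕ) := le_mul_of_one_le_left (Nat.cast_nonneg _) one_le_two
    · exact (norm_largePartsWeight_le_two m i _).trans
        (le_mul_of_one_le_right two_pos.le (by simp))

theorem partFactor_largePartsWeight (hq : ‖q‖ < 1) {i : ℕ} (hi : m < i) :
    partFactor (largePartsWeight m) q i = (1 + q ^ i) / (1 - q ^ i) := by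
  rw [← one_add_tsum_two_mul_pow_succ (norm_pow_lt_one hq (by lia))]
  simp [partFactor, largePartsWeight, hi.not_ge, pow_mul]

theorem partFactor_largePartsWeight_of_le {i : ℕ} (hi : i ≤ m) :
    partFactor (largePartsWeight m) q i = 1 := by
  simp [partFactor, largePartsWeight, hi]

theorem partFactor_markedPartWeight_self (hq : ‖q‖ < 1) (hm : m ≠ 0) :
    partFactor (markedPartWeight m) q m = 1 + q ^ m / (1 - q ^ m) ^ 2 := by
  rw [← tsum_succ_mul_pow_succ (norm_pow_lt_one hq hm)]
  simp [partFactor, markedPartWeight, pow_mul]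

theorem partFactor_markedPartWeight_of_ne {i : ℕ} (hi : i ≠ m) :
    partFactor (markedPartWeight m) q i = partFactor (largePartsWeight m) q i := by
  simp [partFactor, markedPartWeight, hi]

theorem tprod_partFactor_markedPartWeight [CompleteSpace K] (hq : ‖q‖ < 1) (hm : m ≠ 0) :
    ∏' i, partFactor (markedPartWeight m) q (i + 1) =
      (1 + q ^ m / (1 - q ^ m) ^ 2) * ∏' i, partFactor (largePartsWeight m) q (i + 1) := by
  obtain ⟨k, rfl⟩ := Nat.exists_eq_add_one_of_ne_zero hm
  have factor_off_k (i : ℕ) :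
      (if i = k then 1 else partFactor (markedPartWeight (k + 1)) q (i + 1)) =
        partFactor (largePartsWeight (k + 1)) q (i + 1) := by
    split_ifs with h
    · rw [h, partFactor_largePartsWeight_of_le le_rfl]
    · exact partFactor_markedPartWeight_of_ne (by lia)
  have multipliable_off_k := (absSummableWeight_largePartsWeight hq (k + 1)).multipliable_partFactor
  rw [Multipliable.tprod_eq_mul_tprod_ite' k, partFactor_markedPartWeight_self hq hm]
  · simp_rw [factor_off_k]
  · refine multipliable_off_k.congr fun i ↦ ?_
    rw [← factor_off_k, Function.update_apply]

end Evaluation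

section QPochhammer

open Finset PowerSeries Nat.Partition

variable {q : ℂ} {m : ℕ}

theorem multipliable_qPochInf (hq : ‖q‖ < 1) (a : ℂ) : Multipliable fun j ↦ 1 - a * q ^ j := by
  simp_rw [sub_eq_add_neg]
  exact multipliable_one_add_of_summable (by simpa using summable_norm_mul_pow hq a)

theorem qPochInf_ne_zero (hq : ‖q‖ < 1) {a : ℂ} (ha : ‖a‖ < 1) : qPochInf a q ≠ 0 := by
  have factor_ne_zero (j : ℕ) : 1 - a * q ^ j ≠ 0 := by
    refine one_sub_ne_zero_of_norm_lt_one ?_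
    rw [norm_mul, norm_pow]
    exact mul_lt_one_of_nonneg_of_lt_one_left (norm_nonneg a) ha (pow_le_one₀ (norm_nonneg q) hq.le)
  simp_rw [qPochInf, sub_eq_add_neg]
  refine tprod_one_add_ne_zero_of_summable (fun j ↦ ?_) (by simpa using summable_norm_mul_pow hq a)
  simpa [← sub_eq_add_neg] using factor_ne_zero j

theorem tprod_partFactor_largePartsWeight (hq : ‖q‖ < 1) (m : ℕ) :
    ∏' i, partFactor (largePartsWeight m) q (i + 1) =
      qPochInf (-q ^ (m + 1)) q / qPochInf (q ^ (m + 1)) q := by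
  have shifted_factor (i : ℕ) : partFactor (largePartsWeight m) q (i + m + 1) =
      (1 - -q ^ (m + 1) * q ^ i) / (1 - q ^ (m + 1) * q ^ i) := by
    rw [partFactor_largePartsWeight hq (by lia)]
    ring_nf
  have numerator := multipliable_qPochInf hq (-q ^ (m + 1))
  have denominator := multipliable_qPochInf hq (q ^ (m + 1))
  have denominator_ne_zero := qPochInf_ne_zero hq (norm_pow_lt_one hq m.succ_ne_zero)
  have shifted_multipliable :
      Multipliable fun i ↦ partFactor (largePartsWeight m) q (i + m + 1) := by
    simp_rw [shifted_factor]
    exact (numerator.hasProd.div₀ denominator.hasProd denominator_ne_zero).multipliable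
  rw [← shifted_multipliable.prod_mul_tprod_nat_mul'
      (f := fun i ↦ partFactor (largePartsWeight m) q (i + 1)),
    prod_eq_one fun i hi ↦ partFactor_largePartsWeight_of_le (mem_range.mp hi), one_mul]
  simp_rw [shifted_factor]
  exact numerator.tprod_div₀ denominator denominator_ne_zero

theorem absHasSumAt_sptBar (hq : ‖q‖ < 1) (hm : m ≠ 0) :
    AbsHasSumAt (PowerSeries.mk fun n ↦ (sptBar m n : ℂ)) q
      (q ^ m * qPochInf (-q ^ (m + 1)) q / ((1 - q ^ m) ^ 2 * qPochInf (q ^ (m + 1)) q)) := by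
  have difference := (absSummableWeight_markedPartWeight hq m).absHasSumAt_genFun.sub
    (absSummableWeight_largePartsWeight hq m).absHasSumAt_genFun
  rwa [genFun_markedPartWeight hm, add_sub_cancel_left, tprod_partFactor_markedPartWeight hq hm,
    add_mul, one_mul, add_sub_cancel_left, tprod_partFactor_largePartsWeight hq,
    div_mul_div_comm] at difference

theorem summable_spt2bar_mul_pow {r : ℝ} (r_nonneg : 0 ≤ r) (hr : r < 1) :
    Summable fun n ↦ (spt2bar n : ℝ) * r ^ n := by
  have dominating : AbsSummableWeight (fun _ c ↦ (2 * c : ℝ)) r :=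
    .of_norm_le_const_mul (C := 2) (by rwa [Real.norm_of_nonneg r_nonneg]) fun _ _ ↦
      (Real.norm_of_nonneg (by positivity)).le
  refine Summable.of_nonneg_of_le (fun n ↦ by positivity) (fun n ↦ ?_)
    (dominating.summable_coeff_genFun_of_nonneg (fun _ _ ↦ by positivity) r_nonneg)
  gcongr
  exact spt2bar_le_coeff_genFun n

theorem summable_sptBar_even_mul_pow (hq : ‖q‖ < 1) :
    Summable fun x : ℕ × ℕ ↦ (sptBar (2 * (x.2 + 1)) x.1 : ℂ) * q ^ x.1 := by
  have row_hasSum (n : ℕ) : HasSum (fun k ↦ ‖(sptBar (2 * (k + 1)) n : ℂ) * q ^ n‖)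
      (spt2bar n * ‖q‖ ^ n) := by
    simp_rw [norm_mul, norm_pow, Complex.norm_natCast]
    exact (hasSum_natCast_sptBar_even (A := ℝ) n).mul_right _
  refine .of_norm <| (summable_prod_of_nonneg fun _ ↦ norm_nonneg _).mpr
    ⟨fun n ↦ (row_hasSum n).summable, ?_⟩
  simpa only [(row_hasSum _).tsum_eq] using summable_spt2bar_mul_pow (norm_nonneg q) hq

end QPochhammer

/-- Generating function for `spt2bar`:
`∑_{n≥1} spt2bar(n) q^n = ∑_{n≥1} q^{2n} (-q^{2n+1};q)_∞ / ((1-q^{2n})^2 (q^{2n+1};q)_∞)`. -/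
theorem spt2bar_gen_fun (q : ℂ) (hq : ‖q‖ < 1) :
    ∑' n : ℕ, (spt2bar n : ℂ) * q ^ n =
      ∑' n : ℕ, q ^ (2 * (n + 1)) * qPochInf (-q ^ (2 * (n + 1) + 1)) q /
        ((1 - q ^ (2 * (n + 1))) ^ 2 * qPochInf (q ^ (2 * (n + 1) + 1)) q) := by
  have split_by_smallestPart (n : ℕ) :
      HasSum (fun k ↦ (sptBar (2 * (k + 1)) n : ℂ) * q ^ n) (spt2bar n * q ^ n) :=
    (hasSum_natCast_sptBar_even (A := ℂ) n).mul_right _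
  have sum_sptBar (k : ℕ) := (absHasSumAt_sptBar hq (m := 2 * (k + 1)) (by simp)).hasSum
  simp only [PowerSeries.coeff_mk] at sum_sptBar
  calc ∑' n, (spt2bar n : ℂ) * q ^ n
      = ∑' n, ∑' k, (sptBar (2 * (k + 1)) n : ℂ) * q ^ n :=
        tsum_congr fun n ↦ (split_by_smallestPart n).tsum_eq.symm
    _ = ∑' k, ∑' n, (sptBar (2 * (k + 1)) n : ℂ) * q ^ n :=
        (summable_sptBar_even_mul_pow hq).tsum_comm.symm
    _ = _ := tsum_congr fun k ↦ (sum_sptBar k).tsum_eq
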